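/- Let F ∈ K[y, p] be irreducible over the algebraic closure of K, with K of characteristic zero, and suppose y(x) is a non-constant solution of F(y, y') = 0 that is algebraic over K̄(x) with minimal polynomial G ∈ K̄[x, y]. Then for every c ∈ K̄, every Puiseux series root of G(x + c, y) (as a polynomial in y) is a solution of F(y, y') = 0. -/

import Mathlib

noncomputable section
open HahnSeries

variable {L : Type*} [Field L]

/-- formal derivative of a Laurent series -/
def lderiv (f : LaurentSeries L) : LaurentSeries L :=
  { coeff := fun n => (n + 1 : ℤ) • f.coeff (n + 1)
    isPWO_support' := by
      apply Set.IsPWO.mono (Set.IsPWO.image_of_monotone f.isPWO_support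
        (f := fun n => n - 1) (fun a b h => by simpa using h))
      intro n hn
      refine ⟨n + 1, ?_, by simp⟩
      simp only [Function.mem_support] at hn ⊢
      exact fun h => hn (by rw [h]; simp) }

/-- A Puiseux series `y(x) = Y(x^{1/n})` is represented by a Laurent series `Y`
in the variable `t = x^{1/n}`.  Its derivative `dy/dx`, re-expanded in `t`, is
`Y'(t)/(n t^{n-1})`. -/
def bOf (n : ℕ) (Y : LaurentSeries L) : LaurentSeries L :=
  HahnSeries.single (1 - (n : ℤ)) ((n : L)⁻¹) * lderiv Y


section helpers
open Polynomial

/-- Core algebra over the fraction field. -/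
lemma core_field {E M : Type*} [Field E] [CharZero E] [Field M] (f s : E →+* M) (Y Z : M)
    (g : E[X]) (hg0 : g ≠ 0) (hgY : g.eval₂ f Y = 0) (hgZ : g.eval₂ s Z = 0)
    (hmin : ∀ h : E[X], h ≠ 0 → h.eval₂ f Y = 0 → g.natDegree ≤ h.natDegree) :
    (∀ h : E[X], h.eval₂ f Y = 0 → h.eval₂ s Z = 0) ∧
      (derivative g).eval₂ f Y ≠ 0 ∧ (derivative g).eval₂ s Z ≠ 0 := by
  have hdvd : ∀ h : E[X], h.eval₂ f Y = 0 → g ∣ h := by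
    intro h hh
    rw [← EuclideanDomain.mod_eq_zero]
    by_contra hne
    have h1 : (h % g).eval₂ f Y = 0 := by
      have := congrArg (Polynomial.eval₂ f Y) (EuclideanDomain.div_add_mod h g)
      rw [eval₂_add, eval₂_mul, hgY, hh, zero_mul, zero_add] at this
      exact this
    have h2 := hmin _ hne h1
    have h3 : (h % g).degree < g.degree := EuclideanDomain.mod_lt h hg0
    have := natDegree_lt_natDegree hne h3
    omega
  have hprime : Prime g := by
    refine ⟨hg0, ?_, ?_⟩
    · intro hu
      obtain ⟨b, hb⟩ := hu.exists_right_inv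
      have := congrArg (Polynomial.eval₂ f Y) hb
      simp [eval₂_mul, hgY] at this
    · intro a b hab
      obtain ⟨k, hk⟩ := hab
      have := congrArg (Polynomial.eval₂ f Y) hk
      rw [eval₂_mul, eval₂_mul, hgY, zero_mul, mul_eq_zero] at this
      exact this.imp (hdvd a) (hdvd b)
  have hsep : IsCoprime g (derivative g) := hprime.irreducible.separable
  obtain ⟨a, b, hab⟩ := hsep
  refine ⟨?_, ?_, ?_⟩
  · intro h hh
    obtain ⟨k, rfl⟩ := hdvd h hh
    rw [eval₂_mul, hgZ, zero_mul]
  · intro h0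
    have := congrArg (Polynomial.eval₂ f Y) hab
    simp [eval₂_mul, eval₂_add, hgY, h0] at this
  · intro h0
    have := congrArg (Polynomial.eval₂ s Z) hab
    simp [eval₂_mul, eval₂_add, hgZ, h0] at this

lemma core_domain {R M : Type*} [CommRing R] [IsDomain R] [CharZero R] [Field M] (f s : R →+* M)
    (hf : Function.Injective f) (hs : Function.Injective s) (Y Z : M)
    (g : R[X]) (hg0 : g ≠ 0) (hgY : g.eval₂ f Y = 0) (hgZ : g.eval₂ s Z = 0)
    (hmin : ∀ h : R[X], h ≠ 0 → h.eval₂ f Y = 0 → g.natDegree ≤ h.natDegree) :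
    (∀ h : R[X], h.eval₂ f Y = 0 → h.eval₂ s Z = 0) ∧
      (derivative g).eval₂ f Y ≠ 0 ∧ (derivative g).eval₂ s Z ≠ 0 := by
  let E := FractionRing R
  have hinj : Function.Injective (algebraMap R E) := IsFractionRing.injective R E
  have : CharZero E := charZero_of_injective_algebraMap hinj
  let f' : E →+* M := IsFractionRing.lift hf
  let s' : E →+* M := IsFractionRing.lift hs
  have ef : ∀ h : R[X], (h.map (algebraMap R E)).eval₂ f' Y = h.eval₂ f Y := by
    intro h
    rw [eval₂_map]
    congr 1
    ext r
    exact IsFractionRing.lift_algebraMap hf r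
  have es : ∀ h : R[X], (h.map (algebraMap R E)).eval₂ s' Z = h.eval₂ s Z := by
    intro h
    rw [eval₂_map]
    congr 1
    ext r
    exact IsFractionRing.lift_algebraMap hs r
  obtain ⟨h1, h2, h3⟩ := core_field f' s' Y Z (g.map (algebraMap R E))
    ((Polynomial.map_ne_zero_iff hinj).2 hg0) (by rw [ef, hgY]) (by rw [es, hgZ]) (by
      intro h hh hY
      obtain ⟨b, hbm, hb⟩ := IsLocalization.integerNormalization_spec (nonZeroDivisors R) h
      set h' := IsLocalization.integerNormalization (nonZeroDivisors R) h
      have hb0 : algebraMap R E b ≠ 0 := by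
        rw [Ne, map_eq_zero_iff _ hinj]
        exact nonZeroDivisors.ne_zero hbm
      have hb' : h'.map (algebraMap R E) = Polynomial.C (algebraMap R E b) * h := by
        rw [hb, ← algebraMap_smul E, smul_eq_C_mul]
      rw [natDegree_map_eq_of_injective hinj]
      have := hmin h' (by
        intro h0
        rw [h0, Polynomial.map_zero] at hb'
        have := hb'.symm
        simp [hb0, hh] at this) (by rw [← ef, hb', eval₂_mul, hY, mul_zero])
      rw [← natDegree_map_eq_of_injective hinj h', hb', natDegree_C_mul hb0] at this
      exact this)
  rw [derivative_map] at h2 h3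
  rw [ef] at h2
  rw [es] at h3
  refine ⟨fun h hh => ?_, h2, h3⟩
  rw [← es]
  exact h1 _ (by rw [ef, hh])

lemma laurent_algebraMap {S L : Type*} [CommRing S] [Field L] [Algebra S L] (a : S) :
    algebraMap S (LaurentSeries L) a = HahnSeries.C (algebraMap S L a) := by
  rw [HahnSeries.algebraMap_apply', PowerSeries.algebraMap_apply, HahnSeries.ofPowerSeries_C]

lemma transcendental_of_not_C {L : Type*} [Field L] [IsAlgClosed L] (u : LaurentSeries L)
    (hu : ¬ ∃ c, u = HahnSeries.C c) : Transcendental L u := by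
  intro halg
  apply hu
  have hi := halg.isIntegral
  have hd := IsAlgClosed.degree_eq_one_of_irreducible L (minpoly.irreducible hi)
  obtain ⟨c, hc⟩ := minpoly.mem_range_of_degree_eq_one L u hd
  exact ⟨c, by rw [← hc, laurent_algebraMap]; rfl⟩

/-- transfer to two-variable polynomials -/
lemma core_mv {L M : Type*} [Field L] [CharZero L] [Field M] [Algebra L M] (u v Y Z : M)
    (hu : Transcendental L u) (hv : Transcendental L v)
    (G : MvPolynomial (Fin 2) L) (hG0 : G ≠ 0)
    (hGY : MvPolynomial.aeval ![u, Y] G = 0) (hGZ : MvPolynomial.aeval ![v, Z] G = 0)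
    (hmin : ∀ H : MvPolynomial (Fin 2) L, H ≠ 0 → MvPolynomial.aeval ![u, Y] H = 0 →
      MvPolynomial.degreeOf 1 G ≤ MvPolynomial.degreeOf 1 H) :
    (∀ H : MvPolynomial (Fin 2) L, MvPolynomial.aeval ![u, Y] H = 0 →
        MvPolynomial.aeval ![v, Z] H = 0) ∧
      MvPolynomial.aeval ![u, Y] (MvPolynomial.pderiv 1 G) ≠ 0 ∧
      MvPolynomial.aeval ![v, Z] (MvPolynomial.pderiv 1 G) ≠ 0 := by
  let R := MvPolynomial (Fin 1) L
  let e : MvPolynomial (Fin 2) L ≃ₐ[L] R[X] :=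
    (MvPolynomial.renameEquiv L (Equiv.swap (0 : Fin 2) 1)).trans (MvPolynomial.finSuccEquiv L 1)
  have e0 : e (MvPolynomial.X 0) = Polynomial.C (MvPolynomial.X 0) := by
    have := MvPolynomial.finSuccEquiv_X_succ (R := L) (n := 1) (j := 0)
    simpa [e] using this
  have e1 : e (MvPolynomial.X 1) = X := by
    simpa [e] using MvPolynomial.finSuccEquiv_X_zero (R := L) (n := 1)
  have eC : ∀ a, e (MvPolynomial.C a) = Polynomial.C (MvPolynomial.C a) := by
    intro a
    exact e.commutes a
  have edeg : ∀ H, (e H).natDegree = MvPolynomial.degreeOf 1 H := by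
    intro H
    have := MvPolynomial.degreeOf_rename_of_injective (p := H)
      (Equiv.swap (0 : Fin 2) 1).injective 1
    rw [Equiv.swap_apply_right] at this
    rw [← this, ← MvPolynomial.natDegree_finSuccEquiv]
    rfl
  have ed : ∀ H, e (MvPolynomial.pderiv 1 H) = derivative (e H) := by
    intro H
    induction H using MvPolynomial.induction_on with
    | C a => simp [eC]
    | add p q hp hq => simp [hp, hq]
    | mul_X p i hp =>
      fin_cases i
      · simp [Derivation.leibniz, hp, e0, MvPolynomial.pderiv_X, mul_comm]
      · simp [Derivation.leibniz, hp, e1, MvPolynomial.pderiv_X, mul_comm, add_comm]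
  have ev : ∀ (w W : M) (H : MvPolynomial (Fin 2) L), MvPolynomial.aeval ![w, W] H =
      (e H).eval₂ (MvPolynomial.aeval (fun _ : Fin 1 => w) : R →ₐ[L] M).toRingHom W := by
    intro w W H
    induction H using MvPolynomial.induction_on with
    | C a => simp [eC]
    | add p q hp hq => simp [hp, hq, eval₂_add]
    | mul_X p i hp =>
      fin_cases i
      · simp [hp, e0, eval₂_mul]
      · simp [hp, e1, eval₂_mul]
  have hinj : ∀ w : M, Transcendental L w → Function.Injective
      (MvPolynomial.aeval (fun _ : Fin 1 => w) : R →ₐ[L] M).toRingHom := by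
    intro w hw
    have : AlgebraicIndependent L (fun _ : Fin 1 => w) :=
      algebraicIndependent_unique_type_iff.2 hw
    exact this
  obtain ⟨h1, h2, h3⟩ := core_domain _ _ (hinj u hu) (hinj v hv) Y Z (e G)
    (by simpa using hG0) (by rw [← ev, hGY]) (by rw [← ev, hGZ]) (by
      intro h hh hY
      obtain ⟨H, rfl⟩ := e.surjective h
      rw [edeg, edeg]
      exact hmin H (by simpa using hh) (by rw [ev, hY]))
  refine ⟨fun H hH => ?_, ?_, ?_⟩
  · rw [ev]; exact h1 _ (by rw [← ev, hH])
  · rwa [ev, ed]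
  · rwa [ev, ed]

/-- clearing denominators -/
lemma clear_den {L M : Type*} [Field L] [Field M] [Algebra L M]
    (y a b : MvPolynomial (Fin 2) L) (F : MvPolynomial (Fin 2) L) :
    ∃ (d : ℕ) (H : MvPolynomial (Fin 2) L), ∀ (χ : MvPolynomial (Fin 2) L →ₐ[L] M) (p : M),
      χ b * p = χ a → χ H = χ b ^ d * MvPolynomial.aeval ![χ y, p] F := by
  induction F using MvPolynomial.induction_on with
  | C r => exact ⟨0, MvPolynomial.C r, fun χ p _ => by
      simpa using χ.commutes r⟩
  | add p q hp hq =>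
    obtain ⟨d, H, h⟩ := hp
    obtain ⟨d', H', h'⟩ := hq
    refine ⟨d + d', H * b ^ d' + H' * b ^ d, fun χ p hp => ?_⟩
    simp only [map_add, map_mul, map_pow, h χ p hp, h' χ p hp]
    ring
  | mul_X q i hq =>
    obtain ⟨d, H, h⟩ := hq
    fin_cases i
    · refine ⟨d, H * y, fun χ p hp => ?_⟩
      simp [h χ p hp]
      ring
    · refine ⟨d + 1, H * a, fun χ p hp => ?_⟩
      simp [h χ p hp, ← hp]
      ring

/-- Euler operator `t d/dt`. -/
def eulerOp {L : Type*} [Field L] (f : LaurentSeries L) : LaurentSeries L :=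
  { coeff := fun n => (n : L) * f.coeff n
    isPWO_support' := f.isPWO_support.mono (by
      intro n hn h
      exact hn (by simp [h])) }

lemma eulerOp_support {L : Type*} [Field L] (f : LaurentSeries L) :
    (eulerOp f).support ⊆ f.support := by
  intro n hn h
  exact hn (by simp [eulerOp, h])

lemma eulerOp_mul {L : Type*} [Field L] (f g : LaurentSeries L) :
    eulerOp (f * g) = f * eulerOp g + g * eulerOp f := by
  rw [mul_comm g]
  ext n
  rw [HahnSeries.coeff_add, HahnSeries.coeff_mul_left' f.isPWO_support (eulerOp_support f),
    HahnSeries.coeff_mul_right' g.isPWO_support (eulerOp_support g)]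
  change (n : L) * (f * g).coeff n = _
  rw [HahnSeries.coeff_mul, Finset.mul_sum, ← Finset.sum_add_distrib]
  refine Finset.sum_congr rfl fun ij hij => ?_
  have : ij.1 + ij.2 = n := by
    simp at hij
    exact hij.2.2
  rw [← this]
  simp only [eulerOp]
  push_cast
  ring

/-- The derivation `d/dx` with `x = t^n`. -/
lemma bOf_eq {L : Type*} [Field L] (n : ℕ) (Y : LaurentSeries L) :
    bOf n Y = (HahnSeries.single (-(n : ℤ)) ((n : L)⁻¹) : LaurentSeries L) * eulerOp Y := by
  have h : lderiv Y = HahnSeries.single (-1 : ℤ) (1 : L) * eulerOp Y := by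
    ext k
    have := HahnSeries.coeff_single_mul_add (r := (1 : L)) (x := eulerOp Y) (a := k + 1) (b := -1)
    rw [show k + 1 + -1 = k by ring] at this
    rw [this]
    simp [lderiv, eulerOp]
  rw [bOf, h, ← mul_assoc, HahnSeries.single_mul_single]
  rw [mul_one]
  rw [show (1 - (n : ℤ) + -1) = -(n : ℤ) by ring]

lemma eulerOp_C {L : Type*} [Field L] (c : L) : eulerOp (HahnSeries.C c) = 0 := by
  ext k
  change (k : L) * _ = _
  by_cases hk : k = 0
  · subst hk; simp
  · simp [HahnSeries.C_apply, HahnSeries.coeff_single_of_ne hk]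

lemma eulerOp_add {L : Type*} [Field L] (f g : LaurentSeries L) :
    eulerOp (f + g) = eulerOp f + eulerOp g := by
  ext k
  simp [eulerOp, mul_add]

lemma bOf_add {L : Type*} [Field L] (n : ℕ) (f g : LaurentSeries L) :
    bOf n (f + g) = bOf n f + bOf n g := by
  rw [bOf_eq, bOf_eq, bOf_eq, eulerOp_add, mul_add]

lemma bOf_mul {L : Type*} [Field L] (n : ℕ) (f g : LaurentSeries L) :
    bOf n (f * g) = f * bOf n g + g * bOf n f := by
  rw [bOf_eq, bOf_eq, bOf_eq, eulerOp_mul]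
  ring

lemma bOf_C {L : Type*} [Field L] (n : ℕ) (c : L) : bOf n (HahnSeries.C c) = 0 := by
  rw [bOf_eq, eulerOp_C, mul_zero]

lemma chain_rule {L M : Type*} [Field L] [Field M] [Algebra L M] (D : M → M)
    (hadd : ∀ f g, D (f + g) = D f + D g) (hmul : ∀ f g, D (f * g) = f * D g + g * D f)
    (hC : ∀ c : L, D (algebraMap L M c) = 0) (u Y : M)
    (G : MvPolynomial (Fin 2) L) : D (MvPolynomial.aeval ![u, Y] G) =
      MvPolynomial.aeval ![u, Y] (MvPolynomial.pderiv 0 G) * D u +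
      MvPolynomial.aeval ![u, Y] (MvPolynomial.pderiv 1 G) * D Y := by
  induction G using MvPolynomial.induction_on with
  | C a => simp [hC]
  | add p q hp hq => simp only [map_add, hadd, hp, hq]; ring
  | mul_X p i hp =>
    fin_cases i
    · simp [Derivation.leibniz, hmul, hp, MvPolynomial.pderiv_X]
      ring
    · simp [Derivation.leibniz, hmul, hp, MvPolynomial.pderiv_X]
      ring

lemma bOf_shift {L : Type*} [Field L] [CharZero L] (n : ℕ) (hn : 0 < n) (c : L) :
    bOf n ((HahnSeries.single (n : ℤ) 1 : LaurentSeries L) + HahnSeries.C c) = 1 := by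
  have hn0 : (n : L) ≠ 0 := by exact_mod_cast hn.ne'
  have h1 : eulerOp (HahnSeries.single (n : ℤ) 1 : LaurentSeries L) =
      HahnSeries.single (n : ℤ) (n : L) := by
    ext k
    change (k : L) * _ = _
    by_cases hk : k = n
    · subst hk; simp
    · simp [HahnSeries.coeff_single_of_ne hk]
  rw [bOf_add, bOf_C, add_zero, bOf_eq, h1, HahnSeries.single_mul_single]
  simp [hn0]

lemma shift_transcendental {L : Type*} [Field L] [IsAlgClosed L] (n : ℕ) (hn : 0 < n) (c : L) :
    Transcendental L ((HahnSeries.single (n : ℤ) 1 : LaurentSeries L) + HahnSeries.C c) := by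
  apply transcendental_of_not_C
  rintro ⟨d, hd⟩
  have := congrArg (fun f => HahnSeries.coeff f (n : ℤ)) hd
  have hn' : (n : ℤ) ≠ 0 := by exact_mod_cast hn.ne'
  simp [HahnSeries.C_apply, HahnSeries.coeff_single_of_ne hn'] at this

end helpers

/-- **All roots of the shifted minimal polynomial are solutions.**
Let `K` have characteristic zero with algebraic closure `K̄`, and let
`F ∈ K[y,p]` (variables `0 = y`, `1 = p`) be irreducible over `K̄`.  Suppose
`y(x)` is a non-constant solution of `F(y, y') = 0`, represented by the Laurent
series `Y` in `t = x^{1/n}` (so `y' ↦ bOf n Y`), which is algebraic over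
`K̄(x)` with minimal polynomial `G ∈ K̄[x,y]` (variables `0 = x`, `1 = y`;
minimality of the degree in `y` among nonzero annihilating polynomials).  Then
for every `c ∈ K̄`, every Puiseux series root `z(x)` of `G(x + c, y)`
(represented by a Laurent series `Z` in `t = x^{1/m}`) is a solution of
`F(y, y') = 0`. -/
theorem roots_of_shifted_minimal_polynomial_are_solutions
    (K : Type*) [Field K] [CharZero K]
    (F : MvPolynomial (Fin 2) K)
    (hF : Irreducible (MvPolynomial.map (algebraMap K (AlgebraicClosure K)) F))
    (n : ℕ) (hn : 0 < n)
    (Y : LaurentSeries (AlgebraicClosure K))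
    (hnc : ¬ ∃ c : AlgebraicClosure K, Y = HahnSeries.C c)
    (hsol : MvPolynomial.aeval ![Y, bOf n Y] F = 0)
    (G : MvPolynomial (Fin 2) (AlgebraicClosure K)) (hG0 : G ≠ 0)
    (hGroot : MvPolynomial.aeval
      ![(HahnSeries.single (n : ℤ) 1 : LaurentSeries (AlgebraicClosure K)), Y] G = 0)
    (hGmin : ∀ H : MvPolynomial (Fin 2) (AlgebraicClosure K), H ≠ 0 →
      MvPolynomial.aeval
        ![(HahnSeries.single (n : ℤ) 1 : LaurentSeries (AlgebraicClosure K)), Y] H = 0 →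
      MvPolynomial.degreeOf 1 G ≤ MvPolynomial.degreeOf 1 H) :
    ∀ c : AlgebraicClosure K, ∀ m : ℕ, 0 < m →
      ∀ Z : LaurentSeries (AlgebraicClosure K),
        MvPolynomial.aeval
          ![(HahnSeries.single (m : ℤ) 1 : LaurentSeries (AlgebraicClosure K)) +
              HahnSeries.C c, Z] G = 0 →
        MvPolynomial.aeval ![Z, bOf m Z] F = 0 := by
  intro c m hm Z hZ
  have hF2 : ∀ w : Fin 2 → LaurentSeries (AlgebraicClosure K), MvPolynomial.aeval w F =
      MvPolynomial.aeval w (MvPolynomial.map (algebraMap K (AlgebraicClosure K)) F) := by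
    intro w
    have hC : algebraMap K (LaurentSeries (AlgebraicClosure K)) =
        (algebraMap (AlgebraicClosure K) (LaurentSeries (AlgebraicClosure K))).comp
          (algebraMap K (AlgebraicClosure K)) := by
      refine RingHom.ext fun a => ?_
      rw [RingHom.comp_apply, laurent_algebraMap, laurent_algebraMap]
      rfl
    rw [MvPolynomial.aeval_def, MvPolynomial.aeval_def, MvPolynomial.eval₂_map, hC]
  rw [hF2] at hsol ⊢
  have hu := shift_transcendental (L := AlgebraicClosure K) n hn 0
  have hdu := bOf_shift (L := AlgebraicClosure K) n hn 0
  rw [HahnSeries.C.map_zero, add_zero] at hu hdu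
  have hv := shift_transcendental (L := AlgebraicClosure K) m hm c
  have hdv := bOf_shift (L := AlgebraicClosure K) m hm c
  obtain ⟨h1, h2, h3⟩ := core_mv _ _ Y Z hu hv G hG0 hGroot hZ hGmin
  obtain ⟨d, H, hH⟩ := clear_den (M := LaurentSeries (AlgebraicClosure K)) (MvPolynomial.X 1)
    (-MvPolynomial.pderiv 0 G) (MvPolynomial.pderiv 1 G)
    (MvPolynomial.map (algebraMap K (AlgebraicClosure K)) F)
  have key : ∀ (k : ℕ) (u W : LaurentSeries (AlgebraicClosure K)), bOf k u = 1 →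
      MvPolynomial.aeval ![u, W] G = 0 →
      MvPolynomial.aeval ![u, W] H = MvPolynomial.aeval ![u, W] (MvPolynomial.pderiv 1 G) ^ d *
        MvPolynomial.aeval ![W, bOf k W]
          (MvPolynomial.map (algebraMap K (AlgebraicClosure K)) F) := by
    intro k u W hk hW
    have := hH (MvPolynomial.aeval ![u, W]) (bOf k W) (by
      have hc := chain_rule (bOf k) (bOf_add k) (bOf_mul k)
        (fun c => by rw [laurent_algebraMap]; exact bOf_C k _) u W G
      have h0 := bOf_C k (0 : AlgebraicClosure K)
      rw [map_zero] at h0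
      rw [hW, h0, hk] at hc
      rw [map_neg]
      linear_combination -hc)
    simpa using this
  have hHY := key n _ Y hdu hGroot
  rw [hsol, mul_zero] at hHY
  have hHZ := key m _ Z hdv hZ
  rw [h1 H hHY] at hHZ
  exact (mul_eq_zero.1 hHZ.symm).resolve_left (pow_ne_zero _ h3)
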